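/- Let b ∈ ℝ and let λ be a real number with λ > 2. Then the function t ↦ f₊^λ(t² − b) is twice differentiable on ℝ and its second derivative equals t ↦ 4b · f₊^{λ−2}(t² − b) + (4λ − 2) · f₊^{λ−1}(t² − b). -/

import Mathlib

/-!
The two facts behind the formula are `(f₊^μ)' = f₊^{μ-1}` for `μ > 1`
(`hasDerivAt_gelfandShilov`) and `ς f₊^{μ-1}(ς) = μ f₊^μ(ς)` for `μ > 0`
(`mul_gelfandShilov_sub_one`), both consequences of `Γ(μ+1) = μ Γ(μ)`. The chain rule gives the
first derivative `2t f₊^{λ-1}(t² - b)`. Since `λ - 1 > 1`, it can be differentiated again, to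
`2 f₊^{λ-1}(t² - b) + 4t² f₊^{λ-2}(t² - b)`. Writing `t² = (t² - b) + b` and absorbing the factor
`t² - b` turns the last term into `4(λ-1) f₊^{λ-1}(t² - b) + 4b f₊^{λ-2}(t² - b)`.
-/

/-- The Gelfand–Shilov function `f₊^μ(ς) = ς^μ / Γ(μ+1)` for `ς > 0`, and `0` for `ς ≤ 0`. -/
noncomputable def gelfandShilov (μ : ℝ) (ς : ℝ) : ℝ :=
  if 0 < ς then ς ^ μ / Real.Gamma (μ + 1) else 0

theorem gelfandShilov_of_pos {μ x : ℝ} (hx : 0 < x) :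
    gelfandShilov μ x = x ^ μ / Real.Gamma (μ + 1) := if_pos hx

theorem gelfandShilov_of_nonpos {μ x : ℝ} (hx : x ≤ 0) : gelfandShilov μ x = 0 :=
  if_neg hx.not_gt

/-- For `μ ≠ 0` the power formula extends to `x = 0`. -/
theorem gelfandShilov_of_nonneg {μ x : ℝ} (hμ : μ ≠ 0) (hx : 0 ≤ x) :
    gelfandShilov μ x = x ^ μ / Real.Gamma (μ + 1) := by
  rcases hx.eq_or_lt with rfl | hx
  · rw [gelfandShilov_of_nonpos le_rfl, Real.zero_rpow hμ, zero_div]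
  · exact gelfandShilov_of_pos hx

theorem mul_gelfandShilov_sub_one {μ : ℝ} (hμ : 0 < μ) (x : ℝ) :
    x * gelfandShilov (μ - 1) x = μ * gelfandShilov μ x := by
  rcases le_or_gt x 0 with hx | hx
  · simp [gelfandShilov_of_nonpos hx]
  · have hΓ := (Real.Gamma_pos_of_pos hμ).ne'
    rw [gelfandShilov_of_pos hx, gelfandShilov_of_pos hx, sub_add_cancel,
      Real.Gamma_add_one hμ.ne', Real.rpow_sub_one hx.ne']
    field_simp

theorem hasDerivAt_gelfandShilov {μ : ℝ} (hμ : 1 < μ) (x : ℝ) :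
    HasDerivAt (gelfandShilov μ) (gelfandShilov (μ - 1) x) x := by
  have hμ0 : 0 < μ := by linarith
  have hΓ := (Real.Gamma_pos_of_pos hμ0).ne'
  have hpow : HasDerivAt (fun y : ℝ => y ^ μ / Real.Gamma (μ + 1))
      (x ^ (μ - 1) / Real.Gamma (μ - 1 + 1)) x := by
    convert! (Real.hasDerivAt_rpow_const (x := x) (Or.inr hμ.le)).div_const
      (Real.Gamma (μ + 1)) using 1
    rw [sub_add_cancel, Real.Gamma_add_one hμ0.ne']
    field_simp
  rcases lt_trichotomy x 0 with hx | rfl | hx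
  · rw [gelfandShilov_of_nonpos hx.le]
    refine (hasDerivAt_const x (0 : ℝ)).congr_of_eventuallyEq ?_
    filter_upwards [Iio_mem_nhds hx] with y hy using gelfandShilov_of_nonpos (le_of_lt hy)
  · -- At the origin both one-sided derivatives exist and agree, because `μ > 1`.
    rw [← hasDerivWithinAt_univ, ← Set.Iic_union_Ici (a := (0 : ℝ))]
    refine HasDerivWithinAt.union ?_ ?_
    · rw [gelfandShilov_of_nonpos le_rfl]
      exact (hasDerivWithinAt_const (0 : ℝ) _ (0 : ℝ)).congr
        (fun y hy => gelfandShilov_of_nonpos hy) (gelfandShilov_of_nonpos le_rfl)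
    · rw [gelfandShilov_of_nonneg (by linarith) le_rfl]
      exact hpow.hasDerivWithinAt.congr
        (fun y hy => gelfandShilov_of_nonneg hμ0.ne' hy)
        (gelfandShilov_of_nonneg hμ0.ne' le_rfl)
  · rw [gelfandShilov_of_pos hx]
    refine hpow.congr_of_eventuallyEq ?_
    filter_upwards [Ioi_mem_nhds hx] with y hy using gelfandShilov_of_pos hy

theorem hasDerivAt_gelfandShilov_sq_sub {μ : ℝ} (hμ : 1 < μ) (b t : ℝ) :
    HasDerivAt (fun s : ℝ => gelfandShilov μ (s ^ 2 - b))
      (2 * t * gelfandShilov (μ - 1) (t ^ 2 - b)) t := by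
  have hsq : HasDerivAt (fun s : ℝ => s ^ 2 - b) (2 * t) t := by
    simpa using (hasDerivAt_pow 2 t).sub_const b
  convert! (hasDerivAt_gelfandShilov hμ (t ^ 2 - b)).comp t hsq using 1
  ring

/-- For `b ∈ ℝ` and real `λ > 2`, the function `t ↦ f₊^λ(t² − b)` is twice differentiable
on `ℝ` and its second derivative is `t ↦ 4b·f₊^{λ−2}(t² − b) + (4λ−2)·f₊^{λ−1}(t² − b)`. -/
theorem deriv2_gelfandShilov_sq (b lam : ℝ) (hlam : 2 < lam) :
    Differentiable ℝ (fun t : ℝ => gelfandShilov lam (t ^ 2 - b)) ∧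
    Differentiable ℝ (deriv (fun t : ℝ => gelfandShilov lam (t ^ 2 - b))) ∧
    deriv (deriv (fun t : ℝ => gelfandShilov lam (t ^ 2 - b))) =
      fun t : ℝ => 4 * b * gelfandShilov (lam - 2) (t ^ 2 - b)
        + (4 * lam - 2) * gelfandShilov (lam - 1) (t ^ 2 - b) := by
  have h1 := hasDerivAt_gelfandShilov_sq_sub (show 1 < lam by linarith) b
  have hd : deriv (fun t : ℝ => gelfandShilov lam (t ^ 2 - b)) =
      fun t : ℝ => 2 * t * gelfandShilov (lam - 1) (t ^ 2 - b) := funext fun t => (h1 t).deriv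
  have h2 : ∀ t : ℝ, HasDerivAt (fun t : ℝ => 2 * t * gelfandShilov (lam - 1) (t ^ 2 - b))
      (4 * b * gelfandShilov (lam - 2) (t ^ 2 - b)
        + (4 * lam - 2) * gelfandShilov (lam - 1) (t ^ 2 - b)) t := by
    intro t
    have hlin : HasDerivAt (fun s : ℝ => 2 * s) 2 t := by
      simpa using (hasDerivAt_id t).const_mul (2 : ℝ)
    convert! hlin.mul (hasDerivAt_gelfandShilov_sq_sub (show 1 < lam - 1 by linarith) b t) using 1
    have habs := mul_gelfandShilov_sub_one (show 0 < lam - 1 by linarith) (t ^ 2 - b)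
    rw [show lam - 1 - 1 = lam - 2 by ring] at habs ⊢
    linear_combination (-4) * habs
  rw [hd]
  exact ⟨fun t => (h1 t).differentiableAt, fun t => (h2 t).differentiableAt,
    funext fun t => (h2 t).deriv⟩
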